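/- Let A be a Hopf algebra over a field k with bijective antipode S and let P, Q ∈ A be nonzero idempotents. The following are equivalent: (1) P is a right group-like projection and Q is a right shift of P, i.e. Δ(Q)(1 ⊗ Q) = P ⊗ Q = (1 ⊗ Q)Δ(Q); (2) (1 ⊗ S⁻¹(Q))Δ(P) = Q ⊗ S⁻¹(Q) and Δ(P)(1 ⊗ S(Q)) = Q ⊗ S(Q). Moreover, if Q is a right shift of P then there exists a linear functional μ on A such that Q = (id ⊗ μ)(Δ(P)), and S²(Q) = Q if and only if S²(P) = P. -/

import Mathlib

open scoped TensorProduct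

noncomputable section

variable (k : Type*) [Field k] {A : Type*} [Ring A] [HopfAlgebra k A]

/-- `P` is a right group-like projection: a nonzero idempotent with
`Δ(P)(1 ⊗ P) = P ⊗ P = (1 ⊗ P)Δ(P)`. -/
def IsRightGroupLikeProjection (P : A) : Prop :=
  P ≠ 0 ∧ P * P = P ∧
    Coalgebra.comul (R := k) P * ((1 : A) ⊗ₜ[k] P) = P ⊗ₜ[k] P ∧
    ((1 : A) ⊗ₜ[k] P) * Coalgebra.comul (R := k) P = P ⊗ₜ[k] P

/-- `P` is a left group-like projection: a nonzero idempotent with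
`Δ(P)(P ⊗ 1) = P ⊗ P = (P ⊗ 1)Δ(P)`. -/
def IsLeftGroupLikeProjection (P : A) : Prop :=
  P ≠ 0 ∧ P * P = P ∧
    Coalgebra.comul (R := k) P * (P ⊗ₜ[k] (1 : A)) = P ⊗ₜ[k] P ∧
    (P ⊗ₜ[k] (1 : A)) * Coalgebra.comul (R := k) P = P ⊗ₜ[k] P

/-- A two-sided group-like projection. -/
def IsTwoSidedGroupLikeProjection (P : A) : Prop :=
  IsRightGroupLikeProjection k P ∧ IsLeftGroupLikeProjection k P

/-- `N_P^l = {x : (1 ⊗ P)Δ(x) = x ⊗ P}`. -/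
def NPlSet (P : A) : Set A :=
  {x : A | ((1 : A) ⊗ₜ[k] P) * Coalgebra.comul (R := k) x = x ⊗ₜ[k] P}

/-- `N_P^r = {x : Δ(x)(1 ⊗ P) = x ⊗ P}`. -/
def NPrSet (P : A) : Set A :=
  {x : A | Coalgebra.comul (R := k) x * ((1 : A) ⊗ₜ[k] P) = x ⊗ₜ[k] P}

/-- `N_P = N_P^l ∩ N_P^r`. -/
def NPSet (P : A) : Set A := NPlSet k P ∩ NPrSet k P

/-- `V_P = {(μ ⊗ id)(Δ(P)) : μ ∈ A*}`, the smallest left coideal containing `P`. -/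
def VPSet (P : A) : Set A :=
  {x : A | ∃ μ : A →ₗ[k] k,
    x = TensorProduct.lid k A ((TensorProduct.map μ LinearMap.id) (Coalgebra.comul (R := k) P))}

/-- A submodule `N ⊆ A` is a left coideal if `Δ(N) ⊆ A ⊗ N`. -/
def IsLeftCoideal (N : Submodule k A) : Prop :=
  ∀ x ∈ N, Coalgebra.comul (R := k) x ∈
    LinearMap.range (TensorProduct.map (LinearMap.id : A →ₗ[k] A) N.subtype)

/-- A subalgebra `N ⊆ A` is a left coideal subalgebra if `Δ(N) ⊆ A ⊗ N`. -/
def IsLeftCoidealSubalgebra (N : Subalgebra k A) : Prop :=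
  IsLeftCoideal k (Subalgebra.toSubmodule N)

/-!
The convolution monoid `Hom(C, B)` acts on `C ⊗ B` by `f • (c ⊗ b) = c₁ ⊗ f(c₂) b`. For a Hopf
algebra, `id` acts by the Galois map `a ⊗ b ↦ Δ(a)(1 ⊗ b)`, so the antipode, its convolution
inverse, acts by the inverse map. With `S(xy) = S(y)S(x)` this turns `(1 ⊗ b)Δ(c) = a ⊗ b` into
`Δ(a)(1 ⊗ S(b)) = c ⊗ S(b)`; applied to the two equations defining a right shift it gives (2), and
the inverse of the Galois map at `P ⊗ Q` exhibits `Q ⊗ Q` as the image of `Δ(P)` under a map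
`id ⊗ f`, whence `μ`.

That `P` is group-like comes from computing `(1 ⊗ Δ(Q)) · Δ⁽²⁾(Q) · (1 ⊗ 1 ⊗ Q)`, and its mirror
image, in two ways; it is idempotent because `ε(P) = 1`. For `S²`, which is a bialgebra
endomorphism, note that `Q` determines `P`; conversely, if `S²(P) = P`, multiplying `Δ(P)` by
`1 ⊗ S(Q)` on both sides recovers `Q` and `S²(Q)`.
-/

open Coalgebra HopfAlgebra WithConv

section Tensor

variable {k} {V W : Type*} [AddCommGroup V] [Module k V] [AddCommGroup W] [Module k W]

lemma eq_of_tmul_eq_tmul {v v' : V} {w : W} (hw : w ≠ 0) (h : v ⊗ₜ[k] w = v' ⊗ₜ[k] w) :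
    v = v' := by
  obtain ⟨φ, hφ⟩ := Module.Projective.exists_dual_eq_one k hw
  simpa [hφ] using congr(TensorProduct.rid k V (φ.lTensor V $h))

lemma exists_rid_map_eq_of_lTensor_eq_tmul {U : Type*} [AddCommGroup U] [Module k U]
    (f : U →ₗ[k] W) {t : V ⊗[k] U} {v : V} {w : W} (hw : w ≠ 0)
    (h : f.lTensor V t = v ⊗ₜ[k] w) :
    ∃ μ : U →ₗ[k] k, v = TensorProduct.rid k V (TensorProduct.map LinearMap.id μ t) := by
  obtain ⟨φ, hφ⟩ := Module.Projective.exists_dual_eq_one k hw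
  refine ⟨φ ∘ₗ f, ?_⟩
  rw [← LinearMap.lTensor_def, LinearMap.lTensor_comp_apply, h]
  simp [hφ]

end Tensor

section ConvolutionAction

variable {R C B : Type*} [CommSemiring R] [AddCommMonoid C] [Module R C] [Coalgebra R C]
  [Semiring B] [Algebra R B]

/-- The operator `c ⊗ b ↦ c₁ ⊗ f(c₂) b` on `C ⊗ B`, through which the convolution monoid
`Hom(C, B)` acts. -/
def convAct (f : WithConv (C →ₗ[R] B)) : Module.End R (C ⊗[R] B) :=
  (LinearMap.mul' R B ∘ₗ f.ofConv.rTensor B).lTensor C ∘ₗ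
    (TensorProduct.assoc R C C B).toLinearMap ∘ₗ (comul (R := R)).rTensor B

lemma convAct_tmul (f : WithConv (C →ₗ[R] B)) (c : C) (b : B) :
    convAct f (c ⊗ₜ[R] b) =
      (LinearMap.mulRight R b ∘ₗ f.ofConv).lTensor C (comul (R := R) c) := by
  simp only [convAct, LinearMap.comp_apply, LinearMap.rTensor_tmul, LinearEquiv.coe_coe]
  induction comul (R := R) c using TensorProduct.induction_on with
  | zero => simp
  | tmul x y => simp
  | add x y hx hy => simp only [TensorProduct.add_tmul, map_add, hx, hy]

lemma convAct_one (t : C ⊗[R] B) : convAct 1 t = t := by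
  induction t using TensorProduct.induction_on with
  | zero => simp
  | tmul c b =>
    have unit_mul : LinearMap.mulRight R b ∘ₗ (1 : WithConv (C →ₗ[R] B)).ofConv =
        LinearMap.toSpanSingleton R B b ∘ₗ counit := by
      ext x
      simp [LinearMap.convOne_def, Algebra.smul_def]
    rw [convAct_tmul, unit_mul, LinearMap.lTensor_comp_apply, lTensor_counit_comul]
    simp
  | add x y hx hy => rw [map_add, hx, hy]

lemma convAct_lTensor (f : WithConv (C →ₗ[R] B)) (g : C →ₗ[R] B) (t : C ⊗[R] C) :
    convAct f (g.lTensor C t) =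
      (LinearMap.mul' R B ∘ₗ TensorProduct.map f.ofConv g).lTensor C
        (TensorProduct.assoc R C C C ((comul (R := R)).rTensor C t)) := by
  induction t using TensorProduct.induction_on with
  | zero => simp
  | tmul x y =>
    rw [LinearMap.lTensor_tmul, LinearMap.rTensor_tmul, convAct_tmul]
    induction comul (R := R) x using TensorProduct.induction_on with
    | zero => simp
    | tmul u v => simp
    | add u v hu hv => simp only [TensorProduct.add_tmul, map_add, hu, hv]
  | add x y hx hy => simp only [map_add, hx, hy]

lemma convAct_mul (f g : WithConv (C →ₗ[R] B)) (t : C ⊗[R] B) :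
    convAct (f * g) t = convAct f (convAct g t) := by
  induction t using TensorProduct.induction_on with
  | zero => simp
  | tmul c b =>
    have mul_assoc_right : LinearMap.mul' R B ∘ₗ
          TensorProduct.map f.ofConv (LinearMap.mulRight R b ∘ₗ g.ofConv) =
        LinearMap.mulRight R b ∘ₗ LinearMap.mul' R B ∘ₗ TensorProduct.map f.ofConv g.ofConv := by
      ext x y
      simp [mul_assoc]
    rw [convAct_tmul, convAct_tmul, convAct_lTensor, coassoc_apply, ← LinearMap.lTensor_comp_apply,
      mul_assoc_right]
    rfl
  | add x y hx hy => simp only [map_add, hx, hy]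

end ConvolutionAction

section Antipode

variable {R H : Type*} [CommSemiring R] [Semiring H] [HopfAlgebra R H]

lemma comul_mul_one_tmul_eq_iff (a b : H) (t : H ⊗[R] H) :
    comul (R := R) a * (1 ⊗ₜ[R] b) = t ↔ convAct (toConv (antipode R)) t = a ⊗ₜ[R] b := by
  have galois : comul (R := R) a * (1 ⊗ₜ[R] b) = convAct (toConv LinearMap.id) (a ⊗ₜ[R] b) := by
    rw [convAct_tmul]
    induction comul (R := R) a using TensorProduct.induction_on with
    | zero => simp
    | tmul x y => simp
    | add x y hx hy => simp_all only [add_mul, map_add]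
  rw [galois]
  constructor
  · rintro rfl
    rw [← convAct_mul, LinearMap.antipode_mul_id, convAct_one]
  · intro h
    rw [← h, ← convAct_mul, LinearMap.id_mul_antipode, convAct_one]

lemma convAct_antipode_tmul_antipode (a b : H) :
    convAct (toConv (antipode R)) (a ⊗ₜ[R] antipode R b) =
      (antipode R).lTensor H ((1 ⊗ₜ[R] b) * comul (R := R) a) := by
  rw [convAct_tmul]
  induction comul (R := R) a using TensorProduct.induction_on with
  | zero => simp
  | tmul x y => simp [antipode_mul_antidistrib]
  | add x y hx hy => simp only [mul_add, map_add, hx, hy]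

lemma comul_mul_one_tmul_antipode {a b c : H}
    (h : (1 ⊗ₜ[R] b) * comul (R := R) c = a ⊗ₜ[R] b) :
    comul (R := R) a * (1 ⊗ₜ[R] antipode R b) = c ⊗ₜ[R] antipode R b := by
  rw [comul_mul_one_tmul_eq_iff, convAct_antipode_tmul_antipode, h, LinearMap.lTensor_tmul]

lemma comul_mul_one_tmul_antipode_iff [Module.Flat R H]
    (hS : Function.Injective (antipode R : H →ₗ[R] H)) {a b c : H} :
    comul (R := R) a * (1 ⊗ₜ[R] antipode R b) = c ⊗ₜ[R] antipode R b ↔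
      (1 ⊗ₜ[R] b) * comul (R := R) c = a ⊗ₜ[R] b := by
  refine ⟨fun h => ?_, comul_mul_one_tmul_antipode⟩
  rw [comul_mul_one_tmul_eq_iff, convAct_antipode_tmul_antipode, ← LinearMap.lTensor_tmul] at h
  exact Module.Flat.lTensor_preserves_injective_linearMap _ hS h

lemma algHom_comp_antipode_convMul {B : Type*} [Semiring B] [Algebra R B] (φ : H →ₐ[R] B) :
    toConv (φ.toLinearMap ∘ₗ antipode R) * toConv φ.toLinearMap = 1 := by
  have h := LinearMap.algHom_comp_convMul_distrib φ (toConv (antipode R)) (toConv LinearMap.id)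
  rw [LinearMap.antipode_mul_id] at h
  exact WithConv.ofConv_injective (h.symm.trans (by ext a; simp))

lemma comul_antipode (a : H) :
    comul (R := R) (antipode R a) =
      TensorProduct.map (antipode R) (antipode R) (TensorProduct.comm R H H (comul a)) := by
  let l : H →ₐ[R] H ⊗[R] H := Algebra.TensorProduct.includeLeft
  let r : H →ₐ[R] H ⊗[R] H := Algebra.TensorProduct.includeRight
  let flipped : H →ₗ[R] H ⊗[R] H := TensorProduct.map (antipode R) (antipode R) ∘ₗ
    (TensorProduct.comm R H H).toLinearMap ∘ₗ comul
  have comul_eq :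
      toConv (comul (R := R) (A := H)) = toConv l.toLinearMap * toConv r.toLinearMap := by
    have mul_comp_map : LinearMap.mul' R (H ⊗[R] H) ∘ₗ
        TensorProduct.map l.toLinearMap r.toLinearMap = LinearMap.id := by
      ext x y
      simp [l, r]
    rw [LinearMap.convMul_def, ofConv_toConv, ofConv_toConv, ← LinearMap.comp_assoc, mul_comp_map,
      LinearMap.id_comp]
  have flipped_eq : toConv flipped =
      toConv (r.toLinearMap ∘ₗ antipode R) * toConv (l.toLinearMap ∘ₗ antipode R) := by
    have mul_comp_map : LinearMap.mul' R (H ⊗[R] H) ∘ₗ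
          TensorProduct.map (r.toLinearMap ∘ₗ antipode R) (l.toLinearMap ∘ₗ antipode R) =
        TensorProduct.map (antipode R) (antipode R) ∘ₗ
          (TensorProduct.comm R H H).toLinearMap := by
      ext x y
      simp [l, r]
    rw [LinearMap.convMul_def, ofConv_toConv, ofConv_toConv, ← LinearMap.comp_assoc, mul_comp_map,
      LinearMap.comp_assoc]
  have flipped_mul_comul : toConv flipped * toConv (comul (R := R) (A := H)) = 1 := by
    rw [flipped_eq, comul_eq, mul_assoc, ← mul_assoc (toConv (l.toLinearMap ∘ₗ antipode R)),
      algHom_comp_antipode_convMul, one_mul, algHom_comp_antipode_convMul]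
  have h := left_inv_eq_right_inv flipped_mul_comul LinearMap.comul_right_inv
  exact congr($(h.symm).ofConv a)

lemma map_antipode_antipode_comul (a : H) :
    TensorProduct.map (antipode R ∘ₗ antipode R) (antipode R ∘ₗ antipode R) (comul a) =
      comul (R := R) (antipode R (antipode R a)) := by
  simp only [comul_antipode, ← TensorProduct.map_comm, TensorProduct.map_map,
    TensorProduct.comm_comm]

variable (R H) in
/-- The square of the antipode, as an endomorphism of the bialgebra. -/
def antipodeSq : H →ₐc[R] H :=
  .ofAlgHom
    (.ofLinearMap (antipode R ∘ₗ antipode R) (by simp) (by simp [antipode_mul_antidistrib]))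
    (by ext; simp)
    (AlgHom.ext map_antipode_antipode_comul)

lemma antipodeSq_apply (a : H) : antipodeSq R H a = antipode R (antipode R a) := rfl

lemma map_antipodeSq_antipode_convAct (a b : H) :
    TensorProduct.map (antipode R ∘ₗ antipode R) (antipode R)
        (convAct (toConv (antipode R)) (a ⊗ₜ[R] b)) =
      (1 ⊗ₜ[R] antipode R b) * comul (R := R) (antipode R (antipode R a)) := by
  rw [convAct_tmul, ← antipodeSq_apply (R := R) a, ← CoalgHomClass.map_comp_comul_apply]
  induction comul (R := R) a using TensorProduct.induction_on with
  | zero => simp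
  | tmul x y => simp [antipode_mul_antidistrib, antipodeSq_apply]
  | add x y hx hy => simp only [mul_add, map_add, hx, hy]

end Antipode

section Coassociativity

variable {R H : Type*} [CommSemiring R] [Semiring H] [Bialgebra R H]

variable (R H) in
/-- `Δ ⊗ id : H ⊗ H → H ⊗ (H ⊗ H)`, reassociated, as an algebra homomorphism. -/
def comulLeft : H ⊗[R] H →ₐ[R] H ⊗[R] (H ⊗[R] H) :=
  (Algebra.TensorProduct.assoc R R R H H H).toAlgHom.comp
    (Algebra.TensorProduct.map (Bialgebra.comulAlgHom R H) (AlgHom.id R H))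

variable (R H) in
/-- `id ⊗ Δ : H ⊗ H → H ⊗ (H ⊗ H)`, as an algebra homomorphism. -/
def comulRight : H ⊗[R] H →ₐ[R] H ⊗[R] (H ⊗[R] H) :=
  Algebra.TensorProduct.map (AlgHom.id R H) (Bialgebra.comulAlgHom R H)

lemma comulLeft_tmul (a b : H) :
    comulLeft R H (a ⊗ₜ[R] b) = Algebra.TensorProduct.assoc R R R H H H (comul a ⊗ₜ[R] b) :=
  rfl

lemma comulRight_tmul (a b : H) : comulRight R H (a ⊗ₜ[R] b) = a ⊗ₜ[R] comul b :=
  rfl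

lemma comulLeft_comul (a : H) :
    comulLeft R H (comul a) = comulRight R H (comul a) :=
  coassoc_apply a

end Coassociativity

section Bialgebra

variable {k} {H : Type*} [Ring H] [Bialgebra k H]

lemma one_tmul_mul_comul_of_coassoc {a b c d q e : H} (he : e ≠ 0)
    (ha : (1 ⊗ₜ[k] q) * comul a = b ⊗ₜ[k] q) (hc : comul a * (1 ⊗ₜ[k] e) = c ⊗ₜ[k] e)
    (hd : comul q * (1 ⊗ₜ[k] e) = d ⊗ₜ[k] e) :
    (1 ⊗ₜ[k] d) * comul c = b ⊗ₜ[k] d := by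
  refine eq_of_tmul_eq_tmul he ((TensorProduct.assoc k H H H).injective ?_)
  let α := Algebra.TensorProduct.assoc k k k H H H
  calc α (((1 ⊗ₜ d) * comul c) ⊗ₜ e)
      = α ((1 ⊗ₜ d) ⊗ₜ e) * α (comul c ⊗ₜ 1) := by simp [← map_mul]
    _ = (1 ⊗ₜ comul q) * (α ((1 ⊗ₜ 1) ⊗ₜ e) * α (comul c ⊗ₜ 1)) := by
      rw [← mul_assoc]; simp [α, hd]
    _ = (1 ⊗ₜ comul q) * comulLeft k H (comul a * (1 ⊗ₜ e)) := by
      rw [← map_mul, hc, comulLeft_tmul]; simp [α, ← Algebra.TensorProduct.one_def]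
    _ = comulRight k H ((1 ⊗ₜ q) * comul a) * (1 ⊗ₜ (1 ⊗ₜ e)) := by
      rw [map_mul, map_mul, comulLeft_comul, mul_assoc, comulRight_tmul, comulLeft_tmul]
      simp [Algebra.TensorProduct.one_def]
    _ = α ((b ⊗ₜ d) ⊗ₜ e) := by
      rw [ha, comulRight_tmul]; simp [α, hd]

lemma comul_mul_one_tmul_of_coassoc {a b c d q e : H} (he : e ≠ 0)
    (ha : comul a * (1 ⊗ₜ[k] q) = b ⊗ₜ[k] q) (hc : (1 ⊗ₜ[k] e) * comul a = c ⊗ₜ[k] e)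
    (hd : (1 ⊗ₜ[k] e) * comul q = d ⊗ₜ[k] e) :
    comul c * (1 ⊗ₜ[k] d) = b ⊗ₜ[k] d := by
  refine eq_of_tmul_eq_tmul he ((TensorProduct.assoc k H H H).injective ?_)
  let α := Algebra.TensorProduct.assoc k k k H H H
  calc α ((comul c * (1 ⊗ₜ d)) ⊗ₜ e)
      = α (comul c ⊗ₜ 1) * α ((1 ⊗ₜ d) ⊗ₜ e) := by simp [← map_mul]
    _ = (α (comul c ⊗ₜ 1) * α ((1 ⊗ₜ 1) ⊗ₜ e)) * (1 ⊗ₜ comul q) := by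
      rw [mul_assoc]; simp [α, hd]
    _ = comulLeft k H ((1 ⊗ₜ e) * comul a) * (1 ⊗ₜ comul q) := by
      rw [← map_mul, hc, comulLeft_tmul]; simp [α, ← Algebra.TensorProduct.one_def]
    _ = (1 ⊗ₜ (1 ⊗ₜ e)) * comulRight k H (comul a * (1 ⊗ₜ q)) := by
      rw [map_mul, map_mul, comulLeft_comul, mul_assoc, comulRight_tmul, comulLeft_tmul]
      simp [Algebra.TensorProduct.one_def]
    _ = α ((b ⊗ₜ d) ⊗ₜ e) := by
      rw [ha, comulRight_tmul]; simp [α, hd]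

lemma mul_eq_counit_smul {a b c : H} (h : comul a * (1 ⊗ₜ[k] b) = c ⊗ₜ[k] b) :
    a * b = counit (R := k) c • b := by
  let counitLeft : H ⊗[k] H →ₐ[k] H := (Algebra.TensorProduct.lid k H).toAlgHom.comp
    (Algebra.TensorProduct.map (Bialgebra.counitAlgHom k H) (AlgHom.id k H))
  have counitLeft_tmul (x y : H) : counitLeft (x ⊗ₜ y) = counit (R := k) x • y := rfl
  have counitLeft_comul : counitLeft (comul a) = a :=
    congr(TensorProduct.lid k H $(rTensor_counit_comul (R := k) a)).trans (by simp)
  simpa [counitLeft_tmul, counitLeft_comul] using congr(counitLeft $h)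

end Bialgebra

/-- `Q` is a right shift of `P`: `Δ(Q)(1 ⊗ Q) = P ⊗ Q = (1 ⊗ Q)Δ(Q)`. -/
def IsRightShift (R : Type*) {H : Type*} [CommSemiring R] [Semiring H] [Bialgebra R H]
    (P Q : H) : Prop :=
  comul (R := R) Q * (1 ⊗ₜ[R] Q) = P ⊗ₜ[R] Q ∧ (1 ⊗ₜ[R] Q) * comul (R := R) Q = P ⊗ₜ[R] Q

namespace IsRightShift

lemma map {R H K : Type*} [CommSemiring R] [Semiring H] [Bialgebra R H] [Semiring K]
    [Bialgebra R K] (φ : H →ₐc[R] K) {P Q : H} (h : IsRightShift R P Q) :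
    IsRightShift R (φ P) (φ Q) := by
  have map_comul (a : H) : Algebra.TensorProduct.map (φ : H →ₐ[R] K) (φ : H →ₐ[R] K) (comul a) =
      comul (φ a) :=
    CoalgHomClass.map_comp_comul_apply φ a
  constructor
  · simpa [map_comul] using
      congr(Algebra.TensorProduct.map (φ : H →ₐ[R] K) (φ : H →ₐ[R] K) $(h.1))
  · simpa [map_comul] using
      congr(Algebra.TensorProduct.map (φ : H →ₐ[R] K) (φ : H →ₐ[R] K) $(h.2))

variable {k}

lemma unique {H : Type*} [Ring H] [Bialgebra k H] {P P' Q : H} (h : IsRightShift k P Q)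
    (h' : IsRightShift k P' Q) (hQ : Q ≠ 0) : P = P' :=
  eq_of_tmul_eq_tmul hQ (h.1.symm.trans h'.1)

variable {P Q : A}

lemma isRightGroupLikeProjection (h : IsRightShift k P Q) (hQ0 : Q ≠ 0) (hQ : Q * Q = Q) :
    IsRightGroupLikeProjection k P := by
  have counit_P : counit (R := k) P = 1 := by
    have counit_smul : counit (R := k) P • Q = Q := (mul_eq_counit_smul h.1).symm.trans hQ
    exact smul_left_injective k hQ0 (counit_smul.trans (one_smul k Q).symm)
  have comul_mul : comul P * (1 ⊗ₜ[k] P) = P ⊗ₜ[k] P :=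
    comul_mul_one_tmul_of_coassoc hQ0 h.1 h.2 h.2
  refine ⟨?_, ?_, comul_mul, one_tmul_mul_comul_of_coassoc hQ0 h.2 h.1 h.1⟩
  · rintro rfl
    simp at counit_P
  · rw [mul_eq_counit_smul comul_mul, counit_P, one_smul]

lemma convAct_antipode (h : IsRightShift k P Q) :
    convAct (toConv (antipode k)) (P ⊗ₜ[k] Q) = Q ⊗ₜ[k] Q :=
  (comul_mul_one_tmul_eq_iff Q Q _).1 h.1

lemma exists_eq_rid_map_comul (h : IsRightShift k P Q) (hQ : Q ≠ 0) :
    ∃ μ : A →ₗ[k] k, Q = TensorProduct.rid k A (TensorProduct.map LinearMap.id μ (comul P)) :=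
  exists_rid_map_eq_of_lTensor_eq_tmul _ hQ ((convAct_tmul _ P Q).symm.trans h.convAct_antipode)

lemma one_tmul_antipode_mul_comul (h : IsRightShift k P Q) :
    (1 ⊗ₜ[k] antipode k Q) * comul (R := k) (antipode k (antipode k P)) =
      antipode k (antipode k Q) ⊗ₜ[k] antipode k Q := by
  rw [← map_antipodeSq_antipode_convAct, h.convAct_antipode]
  rfl

lemma antipode_antipode_eq_iff (h : IsRightShift k P Q) (hQ : Q * Q = Q)
    (hSQ : antipode k Q ≠ 0) :
    antipode k (antipode k Q) = Q ↔ antipode k (antipode k P) = P := by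
  constructor
  · intro hQ'
    have h' := h.map (antipodeSq k A)
    rw [antipodeSq_apply Q, hQ'] at h'
    exact h'.unique h (by rintro rfl; simp at hSQ)
  · intro hP
    have left : (1 ⊗ₜ[k] antipode k Q) * comul (R := k) P =
        antipode k (antipode k Q) ⊗ₜ[k] antipode k Q := by
      simpa only [hP] using h.one_tmul_antipode_mul_comul
    have right : comul (R := k) P * (1 ⊗ₜ[k] antipode k Q) = Q ⊗ₜ[k] antipode k Q :=
      comul_mul_one_tmul_antipode h.2
    have idem : antipode k Q * antipode k Q = antipode k Q := by
      rw [← antipode_mul_antidistrib, hQ]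
    have sandwich := congr($left * (1 ⊗ₜ[k] antipode k Q))
    rw [mul_assoc, right] at sandwich
    simp only [Algebra.TensorProduct.tmul_mul_tmul, one_mul, mul_one, idem] at sandwich
    exact (eq_of_tmul_eq_tmul hSQ sandwich).symm

end IsRightShift

lemma isRightShift_iff_antipode {R H : Type*} [CommSemiring R] [Semiring H] [HopfAlgebra R H]
    [Module.Flat R H] (hS : Function.Injective (antipode R : H →ₗ[R] H)) {P Q T : H}
    (hT : antipode R T = Q) :
    IsRightShift R P Q ↔ (1 ⊗ₜ[R] T) * comul (R := R) P = Q ⊗ₜ[R] T ∧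
      comul (R := R) P * (1 ⊗ₜ[R] antipode R Q) = Q ⊗ₜ[R] antipode R Q := by
  rw [comul_mul_one_tmul_antipode_iff hS, ← comul_mul_one_tmul_antipode_iff hS (b := T), hT,
    IsRightShift]

variable {k} in
theorem statement15_general (hS : Function.Injective (antipode k : A →ₗ[k] A)) {P Q T : A}
    (hT : antipode k T = Q) (hQ0 : Q ≠ 0) (hQ : Q * Q = Q) :
    (IsRightGroupLikeProjection k P ∧ IsRightShift k P Q ↔
      (1 ⊗ₜ[k] T) * comul (R := k) P = Q ⊗ₜ[k] T ∧
        comul (R := k) P * (1 ⊗ₜ[k] antipode k Q) = Q ⊗ₜ[k] antipode k Q) ∧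
    (IsRightShift k P Q →
      (∃ μ : A →ₗ[k] k,
        Q = TensorProduct.rid k A (TensorProduct.map LinearMap.id μ (comul P))) ∧
      (antipode k (antipode k Q) = Q ↔ antipode k (antipode k P) = P)) := by
  have hSQ : antipode k Q ≠ 0 := (map_ne_zero_iff _ hS).2 hQ0
  rw [← isRightShift_iff_antipode hS hT]
  exact ⟨⟨And.right, fun h => ⟨h.isRightGroupLikeProjection hQ0 hQ, h⟩⟩,
    fun h => ⟨h.exists_eq_rid_map_comul hQ0, h.antipode_antipode_eq_iff hQ hSQ⟩⟩

/-- Theorem: for nonzero idempotents `P, Q`, the condition "`P` is a right group-like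
projection and `Q` is a right shift of `P`" is equivalent to
`(1 ⊗ S⁻¹(Q))Δ(P) = Q ⊗ S⁻¹(Q)` and `Δ(P)(1 ⊗ S(Q)) = Q ⊗ S(Q)`.  Moreover, if `Q` is a
right shift of `P` then `Q = (id ⊗ μ)(Δ(P))` for some functional `μ`, and
`S²(Q) = Q ↔ S²(P) = P`. -/
theorem statement15
    (Sinv : A →ₗ[k] A)
    (hinv : ∀ a : A, Sinv (HopfAlgebra.antipode (R := k) a) = a ∧
      HopfAlgebra.antipode (R := k) (Sinv a) = a)
    (P Q : A) (hP0 : P ≠ 0) (hP2 : P * P = P) (hQ0 : Q ≠ 0) (hQ2 : Q * Q = Q) :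
    ((IsRightGroupLikeProjection k P ∧
        Coalgebra.comul (R := k) Q * ((1 : A) ⊗ₜ[k] Q) = P ⊗ₜ[k] Q ∧
        ((1 : A) ⊗ₜ[k] Q) * Coalgebra.comul (R := k) Q = P ⊗ₜ[k] Q) ↔
      (((1 : A) ⊗ₜ[k] Sinv Q) * Coalgebra.comul (R := k) P = Q ⊗ₜ[k] Sinv Q ∧
        Coalgebra.comul (R := k) P *
            ((1 : A) ⊗ₜ[k] HopfAlgebra.antipode (R := k) Q) =
          Q ⊗ₜ[k] HopfAlgebra.antipode (R := k) Q)) ∧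
    ((IsRightGroupLikeProjection k P ∧
        Coalgebra.comul (R := k) Q * ((1 : A) ⊗ₜ[k] Q) = P ⊗ₜ[k] Q ∧
        ((1 : A) ⊗ₜ[k] Q) * Coalgebra.comul (R := k) Q = P ⊗ₜ[k] Q) →
      ((∃ μ : A →ₗ[k] k, Q = TensorProduct.rid k A
          ((TensorProduct.map LinearMap.id μ) (Coalgebra.comul (R := k) P))) ∧
       (HopfAlgebra.antipode (R := k) (HopfAlgebra.antipode (R := k) Q) = Q ↔
        HopfAlgebra.antipode (R := k) (HopfAlgebra.antipode (R := k) P) = P))) := by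
  have main := statement15_general (P := P)
    (Function.LeftInverse.injective fun a => (hinv a).1) (hinv Q).2 hQ0 hQ2
  exact ⟨main.1, fun h => main.2 h.2⟩
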